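/- Let G be a weighted interval graph with interval representation I and weight function w : V → ℕ, let S be a reducible set in G, and let P be a path of maximum weight in G with S ⊆ V(P). Then there exists a path P′ of G such that V(P′) = V(P) and the vertices of S appear consecutively in P′ (i.e., the vertices of S form a contiguous subpath of P′). -/

import Mathlib

/-- Left endpoint of `span(S)`. -/
noncomputable def spanL {V : Type*} (l : V → ℝ) (S : Set V) : ℝ := sInf (l '' S)

/-- Right endpoint of `span(S)`. -/
noncomputable def spanR {V : Type*} (r : V → ℝ) (S : Set V) : ℝ := sSup (r '' S)

/-- `S` is a reducible set of the interval graph `G` with representation `I_v = [l v, r v]`: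
the representation restricted to `S` is proper, `G[S]` is connected, and every vertex whose
interval lies inside `span(S)` belongs to `S`. -/
def Reducible {V : Type*} (G : SimpleGraph V) (l r : V → ℝ) (S : Set V) : Prop :=
  (∀ u ∈ S, ∀ v ∈ S, u ≠ v → ¬ Set.Icc (l u) (r u) ⊆ Set.Icc (l v) (r v)) ∧
  (G.induce S).Connected ∧
  (∀ v : V, Set.Icc (l v) (r v) ⊆ Set.Icc (spanL l S) (spanR r S) → v ∈ S)

/-!
A path `x₁, …, xₙ` of an interval graph can be traced by points `t₀, …, tₙ` such that the interval
of `xᵢ` contains `tᵢ₋₁` and `tᵢ`. Inserting these points one after the other into a sorted list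
rearranges the path into one whose tracing points increase: if the new point `t` splits the slot
`[τ, τ']` of `y`, and the new vertex `x` contains `t` and a point already in the list, then `x`
contains one of the halves `[τ, t]`, `[t, τ']` and `y` contains the other.

In a path traced from left to right, let `M` be the part between the first and the last vertex of
`S`. A vertex of `M` outside `S` sticks out of `span(S)`, hence contains its left or its right
endpoint. Moving the former in front of `S`, the latter behind `S`, and sorting `S` by left
endpoints gives again a path.
-/

namespace IntervalPath

variable {V α : Type*} [LinearOrder α] {l r : V → α}

/-- The intervals `[l u, r u]` and `[l v, r v]` intersect, provided that both are nonempty. This is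
adjacency in the interval graph, except that it does not exclude `u = v`. -/
def Meets (l r : V → α) (u v : V) : Prop := l u ≤ r v ∧ l v ≤ r u

/-- Connectedness of the intersection graph of the intervals of `S`, in terms of cuts: whenever `T`
separates `S`, some interval of `S ∩ T` meets one of `S \ T`. -/
def MeetConnected (l r : V → α) (S : Set V) : Prop :=
  ∀ T : Set V, (S ∩ T).Nonempty → (S \ T).Nonempty → ∃ u ∈ S ∩ T, ∃ v ∈ S \ T, Meets l r u v

/-- `IsSweep l r t [t₁, …, tₙ] [x₁, …, xₙ]` says that `t ≤ t₁ ≤ ⋯ ≤ tₙ` and that the interval of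
each `xᵢ` contains `tᵢ₋₁` and `tᵢ`, where `t₀ = t`: the points trace the path `x₁, …, xₙ` from left
to right. -/
inductive IsSweep (l r : V → α) : α → List α → List V → Prop
  | nil (t : α) : IsSweep l r t [] []
  | cons {x : V} {t t' : α} {ts : List α} {xs : List V} (left_le : l x ≤ t) (le : t ≤ t')
      (le_right : t' ≤ r x) (tail : IsSweep l r t' ts xs) : IsSweep l r t (t' :: ts) (x :: xs)

namespace IsSweep

variable {t : α} {ts : List α} {xs : List V}

theorem le_of_mem_points (h : IsSweep l r t ts xs) {s : α} (hs : s ∈ t :: ts) : t ≤ s := by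
  induction h with
  | nil => exact (List.mem_singleton.1 hs).ge
  | cons _ htt' _ _ ih =>
    rcases List.mem_cons.1 hs with rfl | hs
    · exact le_rfl
    · exact htt'.trans (ih hs)

theorem le_right_of_mem (h : IsSweep l r t ts xs) {x : V} (hx : x ∈ xs) : t ≤ r x := by
  induction h with
  | nil => cases hx
  | cons _ htt' hrx _ ih =>
    rcases List.mem_cons.1 hx with rfl | hx
    · exact htt'.trans hrx
    · exact htt'.trans (ih hx)

theorem pairwise_left_le_right (h : IsSweep l r t ts xs) :
    xs.Pairwise fun u v => l u ≤ r v := by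
  induction h with
  | nil => exact .nil
  | cons hlx htt' _ htail ih =>
    exact ih.cons fun y hy => (hlx.trans htt').trans (htail.le_right_of_mem hy)

theorem isChain_meets (h : IsSweep l r t ts xs) : xs.IsChain (Meets l r) := by
  induction h with
  | nil => exact .nil
  | cons hlx htt' hrx htail ih =>
    cases htail with
    | nil => exact .singleton _
    | cons hly ht hry _ =>
      exact .cons_cons ⟨(hlx.trans htt').trans (ht.trans hry), hly.trans hrx⟩ ih

theorem exists_insert (h : IsSweep l r t ts xs) {x : V} {s p : α} (hs : s ∈ t :: ts)
    (hsx : s ∈ Set.Icc (l x) (r x)) (hpx : p ∈ Set.Icc (l x) (r x)) :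
    ∃ ts' xs', IsSweep l r (min t p) ts' xs' ∧ p ∈ min t p :: ts' ∧ xs'.Perm (x :: xs) := by
  induction h generalizing s with
  | nil t =>
    obtain rfl := List.mem_singleton.1 hs
    rcases le_total p s with hps | hsp
    · rw [min_eq_right hps]
      exact ⟨[s], [x], .cons hpx.1 hps hsx.2 (.nil s), List.mem_cons_self, .refl _⟩
    · rw [min_eq_left hsp]
      exact ⟨[p], [x], .cons hsx.1 hsp hpx.2 (.nil p), by simp, .refl _⟩
  | @cons y t t' ts ys hly htt' hry htail ih =>
    have hts : t ≤ s := (htail.cons hly htt' hry).le_of_mem_points hs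
    rcases le_total p t with hpt | htp
    · rw [min_eq_right hpt]
      exact ⟨t :: t' :: ts, x :: y :: ys, .cons hpx.1 hpt (hts.trans hsx.2)
        (.cons hly htt' hry htail), List.mem_cons_self, .refl _⟩
    rw [min_eq_left htp]
    by_cases hsplit : s = t ∧ p ≤ t'
    · obtain ⟨rfl, hpt'⟩ := hsplit
      exact ⟨p :: t' :: ts, x :: y :: ys, .cons hsx.1 htp hpx.2
        (.cons (hly.trans htp) hpt' hry htail), by simp, .refl _⟩
    obtain ⟨s', hs', hs'x⟩ : ∃ s' ∈ t' :: ts, s' ∈ Set.Icc (l x) (r x) := by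
      rcases List.mem_cons.1 hs with rfl | hs
      · have ht'p : t' ≤ p := (not_le.1 fun hpt' => hsplit ⟨rfl, hpt'⟩).le
        exact ⟨t', List.mem_cons_self, hsx.1.trans htt', ht'p.trans hpx.2⟩
      · exact ⟨s, hs, hsx⟩
    obtain ⟨ts', xs', hsweep, hp, hperm⟩ := ih hs' hs'x
    exact ⟨min t' p :: ts', y :: xs',
      .cons hly (le_min htt' htp) ((min_le_left _ _).trans hry) hsweep,
      List.mem_cons_of_mem _ hp, (hperm.cons y).trans (.swap x y ys)⟩

end IsSweep

theorem exists_isSweep_perm (hlr : ∀ v, l v ≤ r v) {L : List V} {x : V}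
    (hL : (x :: L).IsChain (Meets l r)) {p : α} (hp : p ∈ Set.Icc (l x) (r x)) :
    ∃ t ts xs, IsSweep l r t ts xs ∧ p ∈ t :: ts ∧ xs.Perm (x :: L) := by
  induction L generalizing x p with
  | nil => exact ⟨p, [p], [x], .cons hp.1 le_rfl hp.2 (.nil p), List.mem_cons_self, .refl _⟩
  | cons y L ih =>
    obtain ⟨hxy, hyL⟩ := List.isChain_cons_cons.1 hL
    have hsx : max (l x) (l y) ∈ Set.Icc (l x) (r x) := ⟨le_max_left .., max_le (hlr x) hxy.2⟩
    have hsy : max (l x) (l y) ∈ Set.Icc (l y) (r y) := ⟨le_max_right .., max_le hxy.1 (hlr y)⟩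
    obtain ⟨t, ts, xs, hsweep, hs, hperm⟩ := ih hyL hsy
    obtain ⟨ts', xs', hsweep', hp', hperm'⟩ := hsweep.exists_insert hs hsx hp
    exact ⟨_, ts', xs', hsweep', hp', hperm'.trans (hperm.cons x)⟩

theorem exists_perm_isChain_pairwise (hlr : ∀ v, l v ≤ r v) {L : List V}
    (hL : L.IsChain (Meets l r)) :
    ∃ L' : List V, L'.Perm L ∧ L'.IsChain (Meets l r) ∧ L'.Pairwise fun u v => l u ≤ r v := by
  cases L with
  | nil => exact ⟨[], .refl _, .nil, .nil⟩
  | cons x L =>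
    obtain ⟨_, _, xs, hsweep, -, hperm⟩ :=
      exists_isSweep_perm hlr hL (Set.left_mem_Icc.2 (hlr x))
    exact ⟨xs, hperm, hsweep.isChain_meets, hsweep.pairwise_left_le_right⟩

theorem isChain_meets_of_sorted (hlr : ∀ v, l v ≤ r v) {S : Set V} {L : List V}
    (hLS : ∀ u, u ∈ L ↔ u ∈ S) (hsorted : L.Pairwise fun u v => l u ≤ l v)
    (hproper : ∀ u ∈ S, ∀ v ∈ S, l u ≤ l v → r u ≤ r v) (hconn : MeetConnected l r S) :
    L.IsChain (Meets l r) := by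
  refine List.isChain_iff_forall_rel_of_append_cons_cons.2 ?_
  rintro b c X Y rfl
  have hbS : b ∈ S := (hLS b).1 (by simp)
  simp only [List.pairwise_append, List.pairwise_cons] at hsorted
  obtain ⟨-, ⟨hb, hc, -⟩, hX⟩ := hsorted
  refine ⟨(hb c List.mem_cons_self).trans (hlr c), ?_⟩
  by_contra! hgap
  obtain ⟨u, ⟨-, huT⟩, v, ⟨hvS, hvT⟩, huv⟩ := hconn {x | r x < l c} ⟨b, hbS, hgap⟩
    ⟨c, (hLS c).1 (by simp), (hlr c).not_gt⟩
  have hvc : l v < l c := huv.2.trans_lt huT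
  have hvb : l v ≤ l b := by
    have hvL := (hLS v).2 hvS
    simp only [List.mem_append, List.mem_cons] at hvL
    rcases hvL with hv | rfl | rfl | hv
    · exact hX v hv b List.mem_cons_self
    · exact le_rfl
    · exact absurd hvc (lt_irrefl _)
    · exact absurd hvc (hc v hv).not_gt
  exact hvT ((hproper v hvS b hbS hvb).trans_lt hgap)

theorem exists_perm_isChain_of_proper (hlr : ∀ v, l v ≤ r v) {S : Set V} (hne : S.Nonempty)
    {L : List V} (hLS : ∀ u, u ∈ L ↔ u ∈ S)
    (hproper : ∀ u ∈ S, ∀ v ∈ S, l u ≤ l v → r u ≤ r v) (hconn : MeetConnected l r S) :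
    ∃ Q : List V, Q.Perm L ∧ Q.IsChain (Meets l r) ∧
      (∃ a ∈ Q.head?, ∀ u ∈ S, l a ≤ l u) ∧ ∃ z ∈ Q.getLast?, ∀ u ∈ S, r u ≤ r z := by
  classical
  let Q := L.insertionSort fun u v => l u ≤ l v
  have hperm : Q.Perm L := List.perm_insertionSort _ L
  have hQS (u : V) : u ∈ Q ↔ u ∈ S := hperm.mem_iff.trans (hLS u)
  have : Std.Total fun u v : V => l u ≤ l v := ⟨fun u v => le_total (l u) (l v)⟩
  have : IsTrans V fun u v => l u ≤ l v := ⟨fun _ _ _ => le_trans⟩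
  have hsorted : Q.Pairwise fun u v => l u ≤ l v := List.pairwise_insertionSort _ L
  have hQ : Q ≠ [] := List.ne_nil_of_mem ((hQS _).2 hne.some_mem)
  refine ⟨Q, hperm, isChain_meets_of_sorted hlr hQS hsorted hproper hconn,
    ⟨Q.head hQ, List.head_mem_head? hQ, fun u hu => hsorted.rel_head ((hQS u).2 hu)⟩,
    ⟨Q.getLast hQ, List.getLast_mem_getLast? hQ, fun u hu => ?_⟩⟩
  exact hproper u hu _ ((hQS _).1 (List.getLast_mem hQ)) (hsorted.rel_getLast ((hQS u).2 hu))

theorem exists_eq_append_append_of_mem (P : V → Prop) {L : List V} (hL : ∃ x ∈ L, P x) :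
    ∃ A M C : List V, L = A ++ M ++ C ∧ (∀ x ∈ A, ¬P x) ∧ (∀ x ∈ C, ¬P x) ∧
      (∃ s ∈ M.head?, P s) ∧ ∃ s ∈ M.getLast?, P s := by
  classical
  obtain ⟨s, hs⟩ : ∃ s, L.find? (fun x => decide (P x)) = some s :=
    Option.isSome_iff_exists.1 (by simpa using hL)
  obtain ⟨hPs, A, B, rfl, hA⟩ := List.find?_eq_some_iff_append.1 hs
  obtain ⟨s', hs'⟩ : ∃ s', (s :: B).reverse.find? (fun x => decide (P x)) = some s' :=
    Option.isSome_iff_exists.1 (List.find?_isSome.2 ⟨s, by simp, hPs⟩)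
  obtain ⟨hPs', C, D, hBDC, hC⟩ := List.find?_eq_some_iff_append.1 hs'
  have hsB : s :: B = D.reverse ++ [s'] ++ C.reverse := by
    simpa using congrArg List.reverse hBDC
  have hhead : (D.reverse ++ [s']).head? = some s := by
    simpa [List.head?_append] using (congrArg List.head? hsB).symm
  exact ⟨A, D.reverse ++ [s'], C.reverse, by simp [hsB], by simpa using hA,
    by simpa using hC, ⟨s, hhead, by simpa using hPs⟩, s', by simp, by simpa using hPs'⟩

theorem isChain_append_clique_append {R : V → V → Prop} {A F Q : List V} (hA : A.IsChain R)
    (hF : ∀ u ∈ F, ∀ v ∈ F, R u v) (hQ : Q.IsChain R) (hAF : ∀ u ∈ A.getLast?, ∀ v ∈ F, R u v)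
    (hAQ : ∀ u ∈ A.getLast?, ∀ v ∈ Q.head?, R u v) (hFQ : ∀ u ∈ F, ∀ v ∈ Q.head?, R u v) :
    (A ++ F ++ Q).IsChain R := by
  have hFc : F.IsChain R := (List.pairwise_of_forall_mem_list hF).isChain
  have hAFc : (A ++ F).IsChain R := List.isChain_append.2
    ⟨hA, hFc, fun u hu v hv => hAF u hu v (List.mem_of_mem_head? hv)⟩
  refine List.isChain_append.2 ⟨hAFc, hQ, fun u hu v hv => ?_⟩
  rw [List.getLast?_append, Option.mem_def, Option.or_eq_some_iff] at hu
  rcases hu with hu | ⟨-, hu⟩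
  · exact hFQ u (List.mem_of_mem_getLast? hu) v hv
  · exact hAQ u hu v hv

theorem isChain_append_append_of_left_le (hlr : ∀ v, l v ≤ r v) {A M F Q : List V}
    (hchain : (A ++ M).IsChain (Meets l r)) (hsweep : (A ++ M).Pairwise fun u v => l u ≤ r v)
    (hQ : Q.IsChain (Meets l r)) {s a : V} (hs : s ∈ M.head?) (ha : a ∈ Q.head?) (haM : a ∈ M)
    (has : l a ≤ l s) (hF : ∀ u ∈ F, u ∈ M ∧ l u ≤ l a) :
    (A ++ F ++ Q).IsChain (Meets l r) := by
  obtain ⟨hA, -, hAs⟩ := List.isChain_append.1 hchain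
  obtain ⟨-, hMsweep, hAMsweep⟩ := List.pairwise_append.1 hsweep
  have : Std.Refl fun u v => l u ≤ r v := ⟨hlr⟩
  have hright {y : V} (hy : y ∈ M) : l a ≤ r y := has.trans <| by
    simpa only [List.head_of_mem_head? hs] using hMsweep.rel_head hy
  have hmeets {u v : V} (hu : u ∈ M ∧ l u ≤ l a) (hv : v ∈ M ∧ l v ≤ l a) : Meets l r u v :=
    ⟨hu.2.trans (hright hv.1), hv.2.trans (hright hu.1)⟩
  have hA_meets {y : V} (hy : y ∈ M ∧ l y ≤ l a) : ∀ x ∈ A.getLast?, Meets l r x y :=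
    fun x hx => ⟨hAMsweep x (List.mem_of_mem_getLast? hx) y hy.1,
      (hy.2.trans has).trans (hAs x hx s hs).2⟩
  refine isChain_append_clique_append hA (fun u hu v hv => hmeets (hF u hu) (hF v hv)) hQ
    (fun x hx u hu => hA_meets (hF u hu) x hx) (fun x hx y hy => ?_) (fun u hu y hy => ?_)
  · obtain rfl := Option.mem_unique ha hy
    exact hA_meets ⟨haM, le_rfl⟩ x hx
  · obtain rfl := Option.mem_unique ha hy
    exact hmeets (hF u hu) ⟨haM, le_rfl⟩

theorem isChain_append_append_of_right_le (hlr : ∀ v, l v ≤ r v) {M C Q H : List V}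
    (hchain : (M ++ C).IsChain (Meets l r)) (hsweep : (M ++ C).Pairwise fun u v => l u ≤ r v)
    (hQ : Q.IsChain (Meets l r)) {s z : V} (hs : s ∈ M.getLast?) (hz : z ∈ Q.getLast?)
    (hzM : z ∈ M) (hsz : r s ≤ r z) (hH : ∀ u ∈ H, u ∈ M ∧ r z ≤ r u) :
    (Q ++ H ++ C).IsChain (Meets l r) := by
  obtain ⟨-, hC, hsC⟩ := List.isChain_append.1 hchain
  obtain ⟨hMsweep, -, hMCsweep⟩ := List.pairwise_append.1 hsweep
  have : Std.Refl fun u v => l u ≤ r v := ⟨hlr⟩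
  have hleft {y : V} (hy : y ∈ M) : l y ≤ r z := by
    refine le_trans ?_ hsz
    simpa only [List.getLast_of_mem_getLast? hs] using hMsweep.rel_getLast hy
  have hmeets {u v : V} (hu : u ∈ M ∧ r z ≤ r u) (hv : v ∈ M ∧ r z ≤ r v) : Meets l r u v :=
    ⟨(hleft hu.1).trans hv.2, (hleft hv.1).trans hu.2⟩
  have hmeets_C {y : V} (hy : y ∈ M ∧ r z ≤ r y) : ∀ x ∈ C.head?, Meets l r y x :=
    fun x hx => ⟨hMCsweep y hy.1 x (List.mem_of_mem_head? hx),
      (hsC s hs x hx).2.trans (hsz.trans hy.2)⟩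
  refine isChain_append_clique_append hQ (fun u hu v hv => hmeets (hH u hu) (hH v hv)) hC
    (fun y hy u hu => ?_) (fun y hy x hx => ?_) (fun u hu x hx => hmeets_C (hH u hu) x hx)
  · obtain rfl := Option.mem_unique hz hy
    exact hmeets ⟨hzM, le_rfl⟩ (hH u hu)
  · obtain rfl := Option.mem_unique hz hy
    exact hmeets_C ⟨hzM, le_rfl⟩ x hx

theorem isChain_regroup (hlr : ∀ v, l v ≤ r v) {A M C F Q H : List V}
    (hchain : (A ++ M ++ C).IsChain (Meets l r))
    (hsweep : (A ++ M ++ C).Pairwise fun u v => l u ≤ r v) (hQ : Q.IsChain (Meets l r))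
    {s s' a z : V} (hs : s ∈ M.head?) (hs' : s' ∈ M.getLast?) (ha : a ∈ Q.head?)
    (hz : z ∈ Q.getLast?) (haM : a ∈ M) (hzM : z ∈ M) (has : l a ≤ l s) (hsz : r s' ≤ r z)
    (hF : ∀ u ∈ F, u ∈ M ∧ l u ≤ l a) (hH : ∀ u ∈ H, u ∈ M ∧ r z ≤ r u) :
    (A ++ F ++ Q ++ H ++ C).IsChain (Meets l r) := by
  have hAFQ : (A ++ F ++ Q).IsChain (Meets l r) := isChain_append_append_of_left_le hlr
    hchain.left_of_append (List.pairwise_append.1 hsweep).1 hQ hs ha haM has hF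
  have hlast : z ∈ (A ++ F ++ Q).getLast? := List.mem_getLast?_append_of_mem_getLast? hz
  rw [List.append_assoc] at hchain hsweep
  exact isChain_append_append_of_right_le hlr hchain.right_of_append
    (List.pairwise_append.1 hsweep).2.1 hAFQ hs' hlast hzM hsz hH

theorem filter_append_append_filter_perm {P : V → Prop} [DecidablePred P] (R : V → Prop)
    [DecidablePred R] {M Q : List V} (hQ : Q.Perm (M.filter P)) :
    (M.filter (fun u => ¬P u ∧ R u) ++ Q ++ M.filter fun u => ¬P u ∧ ¬R u).Perm M := by
  let F := M.filter fun u => ¬P u ∧ R u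
  let H := M.filter fun u => ¬P u ∧ ¬R u
  have hFH : (F ++ H).Perm (M.filter fun u => ¬P u) := by
    simpa [List.filter_filter, Bool.and_comm, F, H] using
      List.filter_append_perm (R ·) (M.filter fun u => ¬P u)
  calc
    (F ++ Q ++ H).Perm (Q ++ F ++ H) := List.perm_append_comm.append_right H
    _ = Q ++ (F ++ H) := List.append_assoc ..
    _ |>.Perm (M.filter P ++ M.filter fun u => ¬P u) := hQ.append hFH
    _ |>.Perm M := by simpa using List.filter_append_perm (P ·) M

theorem exists_perm_isChain_append_of_sweep (hlr : ∀ v, l v ≤ r v) {A M C : List V}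
    (hchain : (A ++ M ++ C).IsChain (Meets l r))
    (hsweep : (A ++ M ++ C).Pairwise fun u v => l u ≤ r v) {S : Set V} (hSM : ∀ u ∈ S, u ∈ M)
    (hhead : ∃ s ∈ M.head?, s ∈ S) (hlast : ∃ s ∈ M.getLast?, s ∈ S)
    (hproper : ∀ u ∈ S, ∀ v ∈ S, l u ≤ l v → r u ≤ r v) (hconn : MeetConnected l r S)
    (hspan : ∀ a ∈ S, ∀ z ∈ S, ∀ v, l a ≤ l v → r v ≤ r z → v ∈ S) :
    ∃ q₁ q₂ q₃ : List V, (q₁ ++ q₂ ++ q₃).Perm (A ++ M ++ C) ∧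
      (q₁ ++ q₂ ++ q₃).IsChain (Meets l r) ∧ {x | x ∈ q₂} = S := by
  classical
  obtain ⟨s, hs, hsS⟩ := hhead
  obtain ⟨s', hs', hsS'⟩ := hlast
  have hfilter (u : V) : u ∈ M.filter (· ∈ S) ↔ u ∈ S := by
    simpa only [List.mem_filter, decide_eq_true_eq] using and_iff_right_of_imp (hSM u)
  obtain ⟨Q, hQperm, hQ, ⟨a, ha, hleast⟩, z, hz, hgreatest⟩ :=
    exists_perm_isChain_of_proper hlr ⟨s, hsS⟩ hfilter hproper hconn
  have hQS (u : V) : u ∈ Q ↔ u ∈ S := hQperm.mem_iff.trans (hfilter u)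
  have haS : a ∈ S := (hQS a).1 (List.mem_of_mem_head? ha)
  have hzS : z ∈ S := (hQS z).1 (List.mem_of_mem_getLast? hz)
  let F := M.filter fun u => u ∉ S ∧ l u < l a
  let H := M.filter fun u => u ∉ S ∧ ¬l u < l a
  have hF : ∀ u ∈ F, u ∈ M ∧ l u ≤ l a := fun u hu => by
    simp only [F, List.mem_filter, decide_eq_true_eq] at hu
    exact ⟨hu.1, hu.2.2.le⟩
  have hH : ∀ u ∈ H, u ∈ M ∧ r z ≤ r u := fun u hu => by
    simp only [H, List.mem_filter, decide_eq_true_eq, not_lt] at hu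
    obtain ⟨huM, huS, hau⟩ := hu
    exact ⟨huM, le_of_not_ge fun huz => huS (hspan a haS z hzS u hau huz)⟩
  have hFQH : (F ++ Q ++ H).Perm M := filter_append_append_filter_perm (l · < l a) hQperm
  refine ⟨A ++ F, Q, H ++ C, ?_, ?_, Set.ext hQS⟩
  · simpa only [List.append_assoc] using (hFQH.append_left A).append_right C
  · simpa only [List.append_assoc] using isChain_regroup hlr hchain hsweep hQ hs hs' ha hz
      (hSM a haS) (hSM z hzS) (hleast s hsS) (hgreatest s' hsS') hF hH

theorem exists_perm_isChain_append (hlr : ∀ v, l v ≤ r v) {L : List V}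
    (hL : L.IsChain (Meets l r)) {S : Set V} (hne : S.Nonempty) (hSL : ∀ s ∈ S, s ∈ L)
    (hproper : ∀ u ∈ S, ∀ v ∈ S, l u ≤ l v → r u ≤ r v) (hconn : MeetConnected l r S)
    (hspan : ∀ a ∈ S, ∀ z ∈ S, ∀ v, l a ≤ l v → r v ≤ r z → v ∈ S) :
    ∃ q₁ q₂ q₃ : List V, (q₁ ++ q₂ ++ q₃).Perm L ∧ (q₁ ++ q₂ ++ q₃).IsChain (Meets l r) ∧
      {x | x ∈ q₂} = S := by
  obtain ⟨L', hperm, hchain, hsweep⟩ := exists_perm_isChain_pairwise hlr hL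
  obtain ⟨A, M, C, rfl, hA, hC, hhead, hlast⟩ :=
    exists_eq_append_append_of_mem (· ∈ S) (hne.imp fun x hx => ⟨hperm.mem_iff.2 (hSL x hx), hx⟩)
  have hSM (u : V) (hu : u ∈ S) : u ∈ M := by
    have huL := hperm.mem_iff.2 (hSL u hu)
    simp only [List.mem_append] at huL
    rcases huL with (huA | huM) | huC
    exacts [absurd hu (hA u huA), huM, absurd hu (hC u huC)]
  obtain ⟨q₁, q₂, q₃, hperm', hregrouped⟩ :=
    exists_perm_isChain_append_of_sweep hlr hchain hsweep hSM hhead hlast hproper hconn hspan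
  exact ⟨q₁, q₂, q₃, hperm'.trans hperm, hregrouped⟩

theorem isChain_adj_of_nodup {G : SimpleGraph V}
    (hadj : ∀ u v, G.Adj u v ↔ u ≠ v ∧ l u ≤ r v ∧ l v ≤ r u) {L : List V}
    (hL : L.IsChain (Meets l r)) (hnd : L.Nodup) : L.IsChain G.Adj := by
  rw [List.isChain_iff_forall_rel_of_append_cons_cons] at hL ⊢
  rintro u v X Y rfl
  have hne : u ≠ v := List.rel_of_pairwise_cons hnd.of_append_right List.mem_cons_self
  exact (hadj u v).2 ⟨hne, hL rfl⟩

end IntervalPath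

namespace Reducible

open IntervalPath

variable {V : Type*} {G : SimpleGraph V} {l r : V → ℝ} {S : Set V}

theorem nonempty (hS : Reducible G l r S) : S.Nonempty :=
  Set.nonempty_coe_sort.1 hS.2.1.nonempty

theorem right_le_right_of_left_le_left (hS : Reducible G l r S) :
    ∀ u ∈ S, ∀ v ∈ S, l u ≤ l v → r u ≤ r v := by
  intro u hu v hv huv
  rcases eq_or_ne v u with rfl | hne
  · exact le_rfl
  · exact le_of_not_ge fun hvu => hS.1 v hv u hu hne (Set.Icc_subset_Icc huv hvu)

theorem meetConnected (hadj : ∀ u v, G.Adj u v ↔ u ≠ v ∧ l u ≤ r v ∧ l v ≤ r u)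
    (hS : Reducible G l r S) : MeetConnected l r S := by
  rintro T ⟨s, hs, hsT⟩ ⟨s', hs', hs'T⟩
  obtain ⟨W⟩ := hS.2.1.preconnected ⟨s, hs⟩ ⟨s', hs'⟩
  obtain ⟨d, -, hfst, hsnd⟩ := W.exists_boundary_dart {x | x.1 ∈ T} hsT hs'T
  exact ⟨d.fst, ⟨d.fst.2, hfst⟩, d.snd, ⟨d.snd.2, hsnd⟩, ((hadj _ _).1 d.adj).2⟩

theorem mem_of_le_of_le (hS : Reducible G l r S) (hfin : S.Finite) :
    ∀ a ∈ S, ∀ z ∈ S, ∀ v, l a ≤ l v → r v ≤ r z → v ∈ S := by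
  intro a ha z hz v hav hvz
  refine hS.2.2 v (Set.Icc_subset_Icc ?_ ?_)
  · exact (csInf_le (hfin.image l).bddBelow (Set.mem_image_of_mem l ha)).trans hav
  · exact hvz.trans (le_csSup (hfin.image r).bddAbove (Set.mem_image_of_mem r hz))

end Reducible

theorem stmt9_general {V : Type*} (G : SimpleGraph V) (l r : V → ℝ) (hlr : ∀ v : V, l v ≤ r v)
    (hadj : ∀ u v : V, G.Adj u v ↔ u ≠ v ∧ l u ≤ r v ∧ l v ≤ r u)
    (S : Set V) (hS : Reducible G l r S) (p : List V) (hp : p.IsChain G.Adj) (hnd : p.Nodup)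
    (hSP : S ⊆ {x : V | x ∈ p}) :
    ∃ p' : List V, p'.IsChain G.Adj ∧ p'.Nodup ∧ (∀ x : V, x ∈ p' ↔ x ∈ p) ∧
      ∃ q1 q2 q3 : List V, p' = q1 ++ q2 ++ q3 ∧ {x : V | x ∈ q2} = S := by
  have hpMeets : p.IsChain (IntervalPath.Meets l r) := hp.imp fun u v huv => ((hadj u v).1 huv).2
  have hfin : S.Finite := p.finite_toSet.subset hSP
  obtain ⟨q₁, q₂, q₃, hperm, hchain, hq₂⟩ := IntervalPath.exists_perm_isChain_append hlr hpMeets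
    hS.nonempty hSP hS.right_le_right_of_left_le_left (hS.meetConnected hadj) (hS.mem_of_le_of_le hfin)
  have hnd' := hperm.nodup_iff.2 hnd
  exact ⟨q₁ ++ q₂ ++ q₃, IntervalPath.isChain_adj_of_nodup hadj hchain hnd', hnd',
    fun x => hperm.mem_iff, q₁, q₂, q₃, rfl, hq₂⟩

theorem stmt9 {V : Type*} [Fintype V]
    (G : SimpleGraph V) (l r : V → ℝ)
    (hlr : ∀ v : V, l v < r v)
    (hinjl : Function.Injective l) (hinjr : Function.Injective r)
    (hlrne : ∀ u v : V, l u ≠ r v)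
    (hadj : ∀ u v : V, G.Adj u v ↔ u ≠ v ∧ l u ≤ r v ∧ l v ≤ r u)
    (w : V → ℕ) (S : Set V) (hS : Reducible G l r S)
    (p : List V) (hp : p.Chain' G.Adj) (hnd : p.Nodup)
    (hmax : ∀ q : List V, q.Chain' G.Adj → q.Nodup → (q.map w).sum ≤ (p.map w).sum)
    (hSP : S ⊆ {x : V | x ∈ p}) :
    ∃ p' : List V, p'.Chain' G.Adj ∧ p'.Nodup ∧ (∀ x : V, x ∈ p' ↔ x ∈ p) ∧
      ∃ q1 q2 q3 : List V, p' = q1 ++ q2 ++ q3 ∧ {x : V | x ∈ q2} = S := by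
  exact stmt9_general G l r (fun v => (hlr v).le) hadj S hS p hp hnd hSP
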